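/- For all integers p ≥ 1, k ≥ 0, every i ∈ {1,...,p}, and every tuple (j_0, j_1, ..., j_p) of nonnegative integers, the counts of adapted noncrossing pair partitions satisfy N_i(k, (j_0 + 1, j_1, ..., j_p)) = N_0(k, (j_0, ..., j_{i-1}, j_i + 1, j_{i+1}, ..., j_p)); that is, increasing the 0-th statistic by 1 on the W_i side corresponds bijectively to increasing the i-th statistic by 1 on the W_0 side. -/

import Mathlib

/-- The letter at position `r` (1-based, `1 ≤ r ≤ 2p`) of the word
`W₀ = 1 2 … p p* … 2* 1*`; here `(l, false)` encodes the letter `l` and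
`(l, true)` encodes the starred letter `l*`. -/
def letter0 (p r : ℕ) : ℕ × Bool :=
  if r ≤ p then (r, false) else (2 * p + 1 - r, true)

/-- The label of position `m` (1-based) under the periodic word `Wᵢᵏ`, where `Wᵢ`
is the cyclic shift of `W₀` to the right by `i` positions. -/
def labelW (p i m : ℕ) : ℕ × Bool :=
  letter0 p ((m - 1 + (2 * p - i)) % (2 * p) + 1)

/-- `π` is a noncrossing pair partition of `{1, …, m}`, encoded as the finite set of
its blocks, each block written as an ordered pair `(a, b)` with `a < b`:
all entries lie in `{1, …, m}`, every point of `{1, …, m}` is covered, distinct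
blocks are disjoint, and no two blocks cross. -/
def IsNCPP (m : ℕ) (π : Finset (ℕ × ℕ)) : Prop :=
  (∀ b ∈ π, 1 ≤ b.1 ∧ b.2 ≤ m ∧ b.1 < b.2) ∧
  (∀ x, 1 ≤ x → x ≤ m → ∃ b ∈ π, x = b.1 ∨ x = b.2) ∧
  (∀ b ∈ π, ∀ c ∈ π, (b.1 = c.1 ∨ b.1 = c.2 ∨ b.2 = c.1 ∨ b.2 = c.2) → b = c) ∧
  (∀ b ∈ π, ∀ c ∈ π, ¬(b.1 < c.1 ∧ c.1 < b.2 ∧ b.2 < c.2))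

/-- `π ∈ NC²₂ₚₖ(Wᵢᵏ)`: a noncrossing pair partition of `{1, …, 2pk}` each of whose
blocks consists of a position labelled `l` and a position labelled `l*` for some
`l ∈ {1, …, p}` (labels taken from the word `Wᵢᵏ`). -/
def AdaptedNCPP (p i k : ℕ) (π : Finset (ℕ × ℕ)) : Prop :=
  IsNCPP (2 * p * k) π ∧
  ∀ b ∈ π, ∃ l, 1 ≤ l ∧ l ≤ p ∧
    ((labelW p i b.1 = (l, false) ∧ labelW p i b.2 = (l, true)) ∨
     (labelW p i b.1 = (l, true) ∧ labelW p i b.2 = (l, false)))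

/-- The right-leg statistic `jₗ(π) = |R_{l+1}(π)| + |R_{l}*(π)|`: the number of blocks
whose right leg (larger element) is labelled `l+1`, plus the number of blocks whose
right leg is labelled `l*` (the conventions `R₀* = R_{p+1} = ∅` hold automatically,
since those labels never occur). -/
def jstat (p i : ℕ) (π : Finset (ℕ × ℕ)) (l : ℕ) : ℕ :=
  (π.filter fun b => labelW p i b.2 = (l + 1, false)).card +
  (π.filter fun b => labelW p i b.2 = (l, true)).card

open Classical in
/-- The finset `NC²₂ₚₖ(Wᵢᵏ)` of noncrossing pair partitions of `{1, …, 2pk}`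
adapted to `Wᵢᵏ`. -/
noncomputable def NCset (p i k : ℕ) : Finset (Finset (ℕ × ℕ)) :=
  (Finset.Icc 1 (2 * p * k) ×ˢ Finset.Icc 1 (2 * p * k)).powerset.filter
    (AdaptedNCPP p i k)

open Classical in
/-- `Nᵢ(k, (j₀, …, j_p))`: the number of `π ∈ NC²₂ₚₖ(Wᵢᵏ)` with `jₗ(π) = jₗ`
for all `0 ≤ l ≤ p`. -/
noncomputable def Ncount (p i k : ℕ) (j : Fin (p + 1) → ℕ) : ℕ :=
  ((NCset p i k).filter fun π => ∀ l : Fin (p + 1), jstat p i π (l : ℕ) = j l).card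

/-- The generating function `𝒩ᵢ(x, d) = Σ_k (Σ_j Nᵢ(k, j) d^j) x^k ∈ ℝ[[x]]`;
for each `k` only finitely many of the counts `Nᵢ(k, j)` are nonzero, so the inner
`tsum` is a finite sum. -/
noncomputable def genFun (p i : ℕ) (d : Fin (p + 1) → ℝ) : PowerSeries ℝ :=
  PowerSeries.mk fun k =>
    ∑' j : Fin (p + 1) → ℕ, (Ncount p i k j : ℝ) * ∏ l, d l ^ j l

/-!
A letter `l` of the word `Wᵢ` leads from level `l - 1` to level `l`, a letter `l*` back from `l` to
`l - 1`, and `Wᵢ` starts at level `i`. An adapted noncrossing pairing, drawn with arcs in a disc,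
cuts the disc into regions of constant level. Besides the outer region, of level `i`, there is one
region directly below each arc, and its level is read off the label of the right leg. So `jₗ(π)`,
plus one if `l = i`, is the number of regions of level `l`.
Moving the last point of the pairing to the front turns `Wᵢᵏ` into `Wᵢ₊₁ᵏ` and does not change the
regions, so the distribution of the region levels is the same for all `i ≤ p`. With `eₗ` the unit
vectors, both sides of the claim count the pairings with `j + e₀ + eᵢ` as numbers of regions.
-/

/-- The ordered pairs `(a, b)` that may occur as blocks of a pair partition of `{1, …, n}`. -/
def IsBlock (n : ℕ) (b : ℕ × ℕ) : Prop :=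
  1 ≤ b.1 ∧ b.2 ≤ n ∧ b.1 < b.2

instance (n : ℕ) : DecidablePred (IsBlock n) := fun _ =>
  inferInstanceAs (Decidable (_ ∧ _ ∧ _))

/-- The blocks `b` and `c` cross, and `b` starts first. -/
def Crosses (b c : ℕ × ℕ) : Prop :=
  b.1 < c.1 ∧ c.1 < b.2 ∧ b.2 < c.2

/-- The effect on blocks of the cyclic rotation `1 ↦ 2 ↦ ⋯ ↦ n ↦ 1` of the points. Pairs that are
not blocks are fixed, which makes it a permutation of all pairs. -/
def rotateBlock (n : ℕ) : Equiv.Perm (ℕ × ℕ) where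
  toFun b :=
    if IsBlock n b then if b.2 = n then (1, b.1 + 1) else (b.1 + 1, b.2 + 1) else b
  invFun b :=
    if IsBlock n b then if b.1 = 1 then (b.2 - 1, n) else (b.1 - 1, b.2 - 1) else b
  left_inv b := by
    dsimp only [IsBlock]
    grind
  right_inv b := by
    dsimp only [IsBlock]
    grind

/-- The cyclic rotation `1 ↦ 2 ↦ ⋯ ↦ n ↦ 1`, acting on sets of blocks. -/
def rotatePartition (n : ℕ) : Equiv.Perm (Finset (ℕ × ℕ)) :=
  (rotateBlock n).finsetCongr

section Rotation

variable {n : ℕ} {b c : ℕ × ℕ} {π : Finset (ℕ × ℕ)}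

lemma rotateBlock_of_snd_eq (hb : IsBlock n b) (hn : b.2 = n) :
    rotateBlock n b = (1, b.1 + 1) := by
  simp [rotateBlock, hb, hn]

lemma rotateBlock_of_snd_ne (hb : IsBlock n b) (hn : b.2 ≠ n) :
    rotateBlock n b = (b.1 + 1, b.2 + 1) := by
  simp [rotateBlock, hb, hn]

lemma isBlock_rotateBlock : IsBlock n (rotateBlock n b) ↔ IsBlock n b := by
  simp only [rotateBlock, Equiv.coe_fn_mk, IsBlock]
  grind

lemma one_eq_leg_rotateBlock_iff (hb : IsBlock n b) :
    (1 = (rotateBlock n b).1 ∨ 1 = (rotateBlock n b).2) ↔ n = b.1 ∨ n = b.2 := by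
  simp only [rotateBlock, Equiv.coe_fn_mk, IsBlock] at *
  grind

lemma succ_eq_leg_rotateBlock_iff (hb : IsBlock n b) {x : ℕ} (hx1 : 1 ≤ x) (hxn : x < n) :
    (x + 1 = (rotateBlock n b).1 ∨ x + 1 = (rotateBlock n b).2) ↔ x = b.1 ∨ x = b.2 := by
  simp only [rotateBlock, Equiv.coe_fn_mk, IsBlock] at *
  grind

lemma rotateBlock_meets_iff (hb : IsBlock n b) (hc : IsBlock n c) :
    ((rotateBlock n b).1 = (rotateBlock n c).1 ∨ (rotateBlock n b).1 = (rotateBlock n c).2 ∨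
      (rotateBlock n b).2 = (rotateBlock n c).1 ∨ (rotateBlock n b).2 = (rotateBlock n c).2) ↔
    (b.1 = c.1 ∨ b.1 = c.2 ∨ b.2 = c.1 ∨ b.2 = c.2) := by
  simp only [rotateBlock, Equiv.coe_fn_mk, IsBlock] at *
  grind

lemma rotateBlock_crosses_or_iff (hb : IsBlock n b) (hc : IsBlock n c) :
    (Crosses (rotateBlock n b) (rotateBlock n c) ∨ Crosses (rotateBlock n c) (rotateBlock n b)) ↔
      (Crosses b c ∨ Crosses c b) := by
  simp only [rotateBlock, Equiv.coe_fn_mk, IsBlock, Crosses] at *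
  grind

lemma forall_mem_rotatePartition {P : ℕ × ℕ → Prop} :
    (∀ b ∈ rotatePartition n π, P b) ↔ ∀ b ∈ π, P (rotateBlock n b) := by
  simp only [rotatePartition, Equiv.finsetCongr_apply, Finset.forall_mem_map,
    Equiv.coe_toEmbedding]

lemma exists_mem_rotatePartition {P : ℕ × ℕ → Prop} :
    (∃ b ∈ rotatePartition n π, P b) ↔ ∃ b ∈ π, P (rotateBlock n b) := by
  simp only [rotatePartition, Equiv.finsetCongr_apply, Finset.mem_map, Equiv.coe_toEmbedding,
    exists_exists_and_eq_and]

lemma forall_mem_isBlock_rotatePartition :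
    (∀ b ∈ rotatePartition n π, IsBlock n b) ↔ ∀ b ∈ π, IsBlock n b := by
  simp only [forall_mem_rotatePartition, isBlock_rotateBlock]

lemma covers_rotatePartition_iff (hπ : ∀ b ∈ π, IsBlock n b) :
    (∀ x, 1 ≤ x → x ≤ n → ∃ b ∈ rotatePartition n π, x = b.1 ∨ x = b.2) ↔
      ∀ x, 1 ≤ x → x ≤ n → ∃ b ∈ π, x = b.1 ∨ x = b.2 := by
  simp only [exists_mem_rotatePartition]
  constructor
  · intro h x hx1 hxn
    rcases hxn.eq_or_lt with rfl | hlt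
    · obtain ⟨b, hb, hbx⟩ := h 1 le_rfl hx1
      exact ⟨b, hb, (one_eq_leg_rotateBlock_iff (hπ b hb)).1 hbx⟩
    · obtain ⟨b, hb, hbx⟩ := h (x + 1) (by omega) hlt
      exact ⟨b, hb, (succ_eq_leg_rotateBlock_iff (hπ b hb) hx1 hlt).1 hbx⟩
  · intro h x hx1 hxn
    obtain rfl | ⟨y, hy1, rfl⟩ : x = 1 ∨ ∃ y, 1 ≤ y ∧ x = y + 1 :=
      hx1.eq_or_lt.imp Eq.symm fun hlt => ⟨x - 1, by omega, by omega⟩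
    · obtain ⟨b, hb, hbn⟩ := h n hxn le_rfl
      exact ⟨b, hb, (one_eq_leg_rotateBlock_iff (hπ b hb)).2 hbn⟩
    · obtain ⟨b, hb, hby⟩ := h y hy1 (by omega)
      exact ⟨b, hb, (succ_eq_leg_rotateBlock_iff (hπ b hb) hy1 hxn).2 hby⟩

lemma disjoint_rotatePartition_iff (hπ : ∀ b ∈ π, IsBlock n b) :
    (∀ b ∈ rotatePartition n π, ∀ c ∈ rotatePartition n π,
      (b.1 = c.1 ∨ b.1 = c.2 ∨ b.2 = c.1 ∨ b.2 = c.2) → b = c) ↔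
    ∀ b ∈ π, ∀ c ∈ π, (b.1 = c.1 ∨ b.1 = c.2 ∨ b.2 = c.1 ∨ b.2 = c.2) → b = c := by
  simp only [forall_mem_rotatePartition, (rotateBlock n).apply_eq_iff_eq]
  refine forall₂_congr fun b hb => forall₂_congr fun c hc => ?_
  rw [rotateBlock_meets_iff (hπ b hb) (hπ c hc)]

lemma noncrossing_rotatePartition_iff (hπ : ∀ b ∈ π, IsBlock n b) :
    (∀ b ∈ rotatePartition n π, ∀ c ∈ rotatePartition n π, ¬Crosses b c) ↔
      ∀ b ∈ π, ∀ c ∈ π, ¬Crosses b c := by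
  simp only [forall_mem_rotatePartition]
  constructor <;> intro h b hb c hc hbc
  · exact ((rotateBlock_crosses_or_iff (hπ b hb) (hπ c hc)).2 (.inl hbc)).elim
      (h b hb c hc) (h c hc b hb)
  · exact ((rotateBlock_crosses_or_iff (hπ b hb) (hπ c hc)).1 (.inl hbc)).elim
      (h b hb c hc) (h c hc b hb)

theorem isNCPP_rotatePartition_iff : IsNCPP n (rotatePartition n π) ↔ IsNCPP n π :=
  (and_congr_left' forall_mem_isBlock_rotatePartition).trans <| and_congr_right fun hπ =>
    and_congr (covers_rotatePartition_iff hπ) <|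
      and_congr (disjoint_rotatePartition_iff hπ) (noncrossing_rotatePartition_iff hπ)

end Rotation

section Labels

variable {p i k : ℕ}

lemma labelW_succ_succ {m : ℕ} (hm : 1 ≤ m) (hi : i < p) :
    labelW p (i + 1) (m + 1) = labelW p i m := by
  unfold labelW
  rw [show m + 1 - 1 + (2 * p - (i + 1)) = m - 1 + (2 * p - i) by omega]

lemma labelW_succ_one (hi : i < p) : labelW p (i + 1) 1 = (i + 1, true) := by
  have hmod : (1 - 1 + (2 * p - (i + 1))) % (2 * p) = 2 * p - (i + 1) := by
    rw [Nat.mod_eq_of_lt] <;> omega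
  rw [labelW, hmod, letter0, if_neg (by omega), Prod.mk.injEq]
  exact ⟨by omega, rfl⟩

lemma labelW_last (hk : 1 ≤ k) (hi : i < p) : labelW p i (2 * p * k) = (i + 1, true) := by
  have hpos : 0 < 2 * p * k := Nat.mul_pos (by omega) hk
  rw [← labelW_succ_succ hpos hi, ← labelW_succ_one hi, labelW, labelW,
    show 2 * p * k + 1 - 1 + (2 * p - (i + 1)) = 1 - 1 + (2 * p - (i + 1)) + 2 * p * k by omega,
    Nat.add_mul_mod_self_left]

lemma labelW_succ_rotateBlock_snd (hi : i < p) {n : ℕ} {b : ℕ × ℕ} (hb : IsBlock n b)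
    (hn : b.2 ≠ n) : labelW p (i + 1) (rotateBlock n b).2 = labelW p i b.2 := by
  rw [rotateBlock_of_snd_ne hb hn, labelW_succ_succ (hb.1.trans hb.2.2.le) hi]

lemma adaptedNCPP_rotatePartition_iff (hk : 1 ≤ k) (hi : i < p) {π : Finset (ℕ × ℕ)} :
    AdaptedNCPP p (i + 1) k (rotatePartition (2 * p * k) π) ↔ AdaptedNCPP p i k π := by
  rw [AdaptedNCPP, AdaptedNCPP, isNCPP_rotatePartition_iff]
  refine and_congr_right fun hπ => ?_
  rw [forall_mem_rotatePartition]
  refine forall₂_congr fun b hb => exists_congr fun l =>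
    and_congr_right fun _ => and_congr_right fun _ => ?_
  have hblock : IsBlock (2 * p * k) b := hπ.1 b hb
  have hleft := labelW_succ_succ hblock.1 hi
  by_cases hlast : b.2 = 2 * p * k
  · rw [rotateBlock_of_snd_eq hblock hlast, hleft, labelW_succ_one hi, hlast, labelW_last hk hi]
    tauto
  · rw [labelW_succ_rotateBlock_snd hi hblock hlast, rotateBlock_of_snd_ne hblock hlast, hleft]

end Labels

/-- The level from which a letter leads away; for the right leg of a block it is the level of the
region directly below the block. The truncated value at `(0, false)` is irrelevant, since the
letters of `Wᵢ` start at `1`. -/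
def levelBefore : ℕ × Bool → ℕ
  | (l, false) => l - 1
  | (l, true) => l

/-- The multiset of levels of the regions into which the pairing `π`, labelled by `Wᵢᵏ`, cuts the
disc: the outer region has level `i`, and every block has one region directly below it. -/
def regionLevels (p i : ℕ) (π : Finset (ℕ × ℕ)) : Multiset ℕ :=
  i ::ₘ π.val.map fun b => levelBefore (labelW p i b.2)

lemma levelBefore_labelW_eq_iff {p i m l : ℕ} :
    levelBefore (labelW p i m) = l ↔
      labelW p i m = (l + 1, false) ∨ labelW p i m = (l, true) := by
  rw [labelW, letter0]
  split_ifs <;> simp [levelBefore]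

lemma count_regionLevels (p i : ℕ) (π : Finset (ℕ × ℕ)) (l : ℕ) :
    (regionLevels p i π).count l = jstat p i π l + if l = i then 1 else 0 := by
  have hdisj : Disjoint (π.filter fun b => labelW p i b.2 = (l + 1, false))
      (π.filter fun b => labelW p i b.2 = (l, true)) :=
    Finset.disjoint_filter.2 fun b _ hb => by simp [hb]
  have hlevel : (π.filter fun b => l = levelBefore (labelW p i b.2)).card = jstat p i π l := by
    simp only [eq_comm (a := l), levelBefore_labelW_eq_iff, Finset.filter_or,
      Finset.card_union_of_disjoint hdisj, jstat]
  rw [regionLevels, Multiset.count_cons, Multiset.count_map, ← hlevel]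
  rfl

section Invariance

variable {p i k : ℕ}

lemma AdaptedNCPP.exists_last_block {π : Finset (ℕ × ℕ)} (h : AdaptedNCPP p i k π)
    (hk : 1 ≤ k) (hi : i < p) :
    ∃ b ∈ π, b.2 = 2 * p * k ∧ labelW p i b.1 = (i + 1, false) := by
  have hpos : 1 ≤ 2 * p * k := Nat.mul_pos (by omega) hk
  obtain ⟨b, hb, hbn⟩ := h.1.2.1 (2 * p * k) hpos le_rfl
  have hlast : b.2 = 2 * p * k := by
    have := h.1.1 b hb
    omega
  refine ⟨b, hb, hlast, ?_⟩
  obtain ⟨l, -, -, hl⟩ := h.2 b hb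
  rw [hlast, labelW_last hk hi] at hl
  grind

/-- Rotating the block `(a, 2pk)` swaps the level below it with that of the outer region. -/
theorem regionLevels_rotatePartition {π : Finset (ℕ × ℕ)} (hk : 1 ≤ k) (hi : i < p)
    (h : AdaptedNCPP p i k π) :
    regionLevels p (i + 1) (rotatePartition (2 * p * k) π) = regionLevels p i π := by
  obtain ⟨b₀, hb₀, hlast, hleft⟩ := h.exists_last_block hk hi
  have hblock : ∀ b ∈ π, IsBlock (2 * p * k) b := h.1.1
  have hb₀_level : levelBefore (labelW p (i + 1) (rotateBlock (2 * p * k) b₀).2) = i := by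
    rw [rotateBlock_of_snd_eq (hblock b₀ hb₀) hlast, labelW_succ_succ (hblock b₀ hb₀).1 hi, hleft]
    rfl
  have hrest_level : ∀ b ∈ π.val.erase b₀,
      levelBefore (labelW p (i + 1) (rotateBlock (2 * p * k) b).2) =
        levelBefore (labelW p i b.2) := by
    intro b hb
    obtain ⟨hne, hbπ⟩ := (Multiset.Nodup.mem_erase_iff π.nodup).1 hb
    have hb_last : b.2 ≠ 2 * p * k := fun heq =>
      hne (h.1.2.2.1 b hbπ b₀ hb₀ (by omega))
    rw [labelW_succ_rotateBlock_snd hi (hblock b hbπ) hb_last]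
  calc regionLevels p (i + 1) (rotatePartition (2 * p * k) π)
      = (i + 1) ::ₘ π.val.map fun b =>
          levelBefore (labelW p (i + 1) (rotateBlock (2 * p * k) b).2) := by
        simp [regionLevels, rotatePartition]
    _ = (i + 1) ::ₘ i ::ₘ (π.val.erase b₀).map fun b => levelBefore (labelW p i b.2) := by
        rw [← Multiset.cons_erase hb₀, Multiset.map_cons, hb₀_level,
          Multiset.map_congr rfl hrest_level, Multiset.cons_erase hb₀]
    _ = i ::ₘ (i + 1) ::ₘ (π.val.erase b₀).map fun b => levelBefore (labelW p i b.2) :=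
        Multiset.cons_swap _ _ _
    _ = regionLevels p i π := by
        rw [regionLevels, ← Multiset.cons_erase hb₀, Multiset.map_cons, hlast, labelW_last hk hi,
          Multiset.cons_erase hb₀]
        rfl

lemma mem_NCset {π : Finset (ℕ × ℕ)} : π ∈ NCset p i k ↔ AdaptedNCPP p i k π := by
  classical
  unfold NCset
  rw [Finset.mem_filter, Finset.mem_powerset, and_iff_right_iff_imp]
  intro h b hb
  have := h.1.1 b hb
  rw [Finset.mem_product, Finset.mem_Icc, Finset.mem_Icc]
  omega

theorem card_filter_regionLevels_succ (hk : 1 ≤ k) (hi : i < p) (P : Multiset ℕ → Prop)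
    [DecidablePred P] :
    ((NCset p (i + 1) k).filter fun π => P (regionLevels p (i + 1) π)).card =
      ((NCset p i k).filter fun π => P (regionLevels p i π)).card := by
  refine (Finset.card_equiv (rotatePartition (2 * p * k)) fun π => ?_).symm
  simp only [Finset.mem_filter, mem_NCset, adaptedNCPP_rotatePartition_iff hk hi]
  refine and_congr_right fun h => ?_
  rw [regionLevels_rotatePartition hk hi h]

theorem card_filter_regionLevels (hk : 1 ≤ k) (hi : i ≤ p) (P : Multiset ℕ → Prop)
    [DecidablePred P] :
    ((NCset p i k).filter fun π => P (regionLevels p i π)).card =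
      ((NCset p 0 k).filter fun π => P (regionLevels p 0 π)).card := by
  induction i with
  | zero => rfl
  | succ i ih => rw [card_filter_regionLevels_succ hk hi, ih (by omega)]

end Invariance

lemma Ncount_update_add_one (p k : ℕ) (i i' : Fin (p + 1)) (j : Fin (p + 1) → ℕ) :
    Ncount p i k (Function.update j i' (j i' + 1)) =
      ((NCset p i k).filter fun π => ∀ l : Fin (p + 1), (regionLevels p i π).count (l : ℕ) =
        (j + Pi.single i 1 + Pi.single i' 1 : Fin (p + 1) → ℕ) l).card := by
  rw [Ncount]
  congr 1
  refine Finset.filter_congr fun π _ => forall_congr' fun l => ?_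
  rw [count_regionLevels, Function.update_apply]
  simp only [Pi.add_apply, Pi.single_apply, Fin.val_inj]
  split_ifs <;> grind

lemma IsNCPP.eq_empty {π : Finset (ℕ × ℕ)} (h : IsNCPP 0 π) : π = ∅ := by
  rw [Finset.eq_empty_iff_forall_notMem]
  intro b hb
  have := h.1 b hb
  omega

lemma Ncount_zero_of_ne_zero {p i : ℕ} {j : Fin (p + 1) → ℕ} {l : Fin (p + 1)} (hl : j l ≠ 0) :
    Ncount p i 0 j = 0 := by
  rw [Ncount, Finset.card_eq_zero, Finset.filter_eq_empty_iff]
  intro π hπ hj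
  rw [(mem_NCset.1 hπ).1.eq_empty] at hj
  exact hl (hj l).symm

theorem Ncount_shift_general (p k : ℕ) (i i' : Fin (p + 1)) (j : Fin (p + 1) → ℕ) :
    Ncount p i k (Function.update j i' (j i' + 1)) =
      Ncount p i' k (Function.update j i (j i + 1)) := by
  rcases Nat.eq_zero_or_pos k with rfl | hk
  · rw [Ncount_zero_of_ne_zero (l := i') (by simp), Ncount_zero_of_ne_zero (l := i) (by simp)]
  · let P (M : Multiset ℕ) : Prop := ∀ l : Fin (p + 1),
      M.count (l : ℕ) = (j + Pi.single i 1 + Pi.single i' 1 : Fin (p + 1) → ℕ) l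
    rw [Ncount_update_add_one, Ncount_update_add_one, add_right_comm j (Pi.single i' 1)]
    exact (card_filter_regionLevels hk i.is_le P).trans
      (card_filter_regionLevels hk i'.is_le P).symm

/-- For `p ≥ 1`, `k ≥ 0`, `i ∈ {1, …, p}` and any tuple `(j₀, …, j_p)` of
nonnegative integers,
`Nᵢ(k, (j₀+1, j₁, …, j_p)) = N₀(k, (j₀, …, j_{i-1}, jᵢ+1, j_{i+1}, …, j_p))`. -/
theorem Ncount_shift (p k i : ℕ) (hp : 1 ≤ p) (hi1 : 1 ≤ i) (hip : i ≤ p)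
    (j : Fin (p + 1) → ℕ) :
    Ncount p i k (Function.update j 0 (j 0 + 1)) =
      Ncount p 0 k
        (Function.update j ⟨i, by omega⟩ (j ⟨i, by omega⟩ + 1)) :=
  Ncount_shift_general p k ⟨i, by omega⟩ 0 j
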